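/- Frobenius character formula for Schur–Weyl duality: for any partition τ of k and variables x_1,...,x_d, p_τ(x) = Σ_{λ ⊢ k, ℓ(λ) ≤ d} χ_λ(τ) s_λ(x), where p_τ is the power-sum polynomial indexed by τ, χ_λ(τ) the value of the irreducible S_k character χ_λ on the conjugacy class of cycle type τ, and s_λ the Schur polynomial. -/

import Mathlib

open Finset Nat

noncomputable section

/-- The cells of the Young diagram of `lam` (row and column indices below `k`). -/
def youngCells (k : ℕ) (lam : ℕ → ℕ) : Finset (ℕ × ℕ) :=
  (range k ×ˢ range k).filter fun c => c.2 < lam c.1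

/-- `lam` is a partition of `k`: a weakly decreasing sequence of naturals summing to `k`
(supported on the first `k` entries). -/
def IsPartitionOf (k : ℕ) (lam : ℕ → ℕ) : Prop :=
  Antitone lam ∧ (∀ i, k ≤ i → lam i = 0) ∧ ∑ i ∈ range k, lam i = k

/-- The Young symmetry operator `e(T)` in the group algebra `ℂ[S_k]`, for a tableau given by
a numbering `t : Fin k → ℕ × ℕ` of the boxes: the signed sum over the column group times the
sum over the row group. -/
def youngSym (k : ℕ) (t : Fin k → ℕ × ℕ) : MonoidAlgebra ℂ (Equiv.Perm (Fin k)) :=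
  (∑ π ∈ univ.filter (fun π : Equiv.Perm (Fin k) => ∀ j, (t (π j)).2 = (t j).2),
      MonoidAlgebra.single π ((Equiv.Perm.sign π : ℤ) : ℂ)) *
    ∑ π ∈ univ.filter (fun π : Equiv.Perm (Fin k) => ∀ j, (t (π j)).1 = (t j).1),
      MonoidAlgebra.single π (1 : ℂ)

/-- The left ideal `ℂ[S_k]·e(T)` generated by the Young symmetry operator of the tableau `t`;
it carries the irreducible representation `U_lam` of `S_k` for `lam` the shape of `t`. -/
def youngIdeal (k : ℕ) (t : Fin k → ℕ × ℕ) :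
    Submodule ℂ (MonoidAlgebra ℂ (Equiv.Perm (Fin k))) :=
  LinearMap.range (LinearMap.mulRight ℂ (youngSym k t))

/-- The value at `π` of the character of the representation of `S_k` on the left ideal
`ℂ[S_k]·e(T)`, i.e. the trace of left multiplication by `π` on this ideal.  For `t` a
tableau of shape `lam ⊢ k` this is the irreducible character `χ_lam(π)`. -/
def youngIdealChar (k : ℕ) (t : Fin k → ℕ × ℕ) (π : Equiv.Perm (Fin k)) : ℂ :=
  LinearMap.trace ℂ (youngIdeal k t)
    ((LinearMap.mulLeft ℂ (MonoidAlgebra.single π (1 : ℂ))).restrict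
      (fun x hx => by
        obtain ⟨a, rfl⟩ := hx
        exact ⟨MonoidAlgebra.single π (1 : ℂ) * a, by
          simp only [LinearMap.mulRight_apply, LinearMap.mulLeft_apply, mul_assoc]⟩))

/-- `chi` is the family of irreducible characters of the symmetric groups: `chi k lam` is the
character of the irreducible representation of `S_k` indexed by the partition `lam ⊢ k`,
realised on the left ideal generated by the Young symmetry operator of any tableau of
shape `lam`. -/
def IsCharacterFamily (chi : (k : ℕ) → (ℕ → ℕ) → Equiv.Perm (Fin k) → ℂ) : Prop :=
  ∀ (k : ℕ) (lam : ℕ → ℕ), IsPartitionOf k lam →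
    ∀ t : Fin k → ℕ × ℕ, Set.BijOn t Set.univ ↑(youngCells k lam) →
      ∀ π, chi k lam π = youngIdealChar k t π

/-- `g` is the family of Kronecker coefficients associated to the character family `chi`:
`g k lam mu nu` is the multiplicity of `U_lam` in `U_mu ⊗ U_nu`, given by
`(1/k!) Σ_{π ∈ S_k} χ_lam(π) χ_mu(π) χ_nu(π)`. -/
def IsKroneckerFamily (chi : (k : ℕ) → (ℕ → ℕ) → Equiv.Perm (Fin k) → ℂ)
    (g : (k : ℕ) → (ℕ → ℕ) → (ℕ → ℕ) → (ℕ → ℕ) → ℕ) : Prop :=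
  ∀ (k : ℕ) (lam mu nu : ℕ → ℕ), IsPartitionOf k lam → IsPartitionOf k mu →
    IsPartitionOf k nu →
      (g k lam mu nu : ℂ) = (k ! : ℂ)⁻¹ * ∑ π : Equiv.Perm (Fin k),
        chi k lam π * chi k mu π * chi k nu π

open scoped Classical

/-!
Frobenius' argument, run with symmetric polynomials only. For a partition `λ` let `ψ_λ(π)` be the
coefficient of `x^{λ+δ}` in `p_π a_δ`, where `p_π` is the power sum of the full cycle type of `π`.
Since `p_π a_δ` is alternating, `p_π a_δ = ∑_λ ψ_λ(π) a_{λ+δ}`, and it remains to show that `ψ_λ`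
is the character of the left ideal `ℂ[S_k] e` for the Young symmetrizer `e` of a tableau of
shape `λ`.

A polarized form of Burnside's count `∑_π p_π = k! h_k` and the Jacobi–Trudi identity give
`∑_π ψ_λ(π) p_π a_δ = k! a_{λ+δ}`, hence `∑_π ψ_λ(π)² = k!`. Let `n` be the coefficient of the
identity in `e²`, so that `e² = n e`, and let `S(π) = n χ_λ(π)` be the trace of `x ↦ π x e` on the
group ring. The rows of the tableau dominate the content of every word with column-distinct letters,
so only the diagonal term of `a_δ` contributes to the pairing of `e` with `ψ_λ`, which gives
`∑_π S(π) ψ_λ(π) = k! n`; and `e² = n e` gives `∑_π S(π)² = k! n²`. Therefore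
`∑_π (S(π) - n ψ_λ(π))² = 0`, that is, `S = n ψ_λ`.
-/

namespace FrobeniusFormula

section Words

open MvPolynomial Equiv

variable {ι ρ : Type*} [Fintype ι]

/-- The content of a word `f` with positions `ι` and letters `ρ`: how often each letter occurs. It
is the exponent of the monomial `∏ j, X (f j)`. -/
def content (f : ι → ρ) : ρ →₀ ℕ := ∑ j, Finsupp.single (f j) 1

lemma content_apply [DecidableEq ρ] (f : ι → ρ) (m : ρ) : content f m = #{j | f j = m} := by
  rw [card_filter]
  simp [content, Finsupp.finsetSum_apply, Finsupp.single_apply]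

lemma content_comp_perm (f : ι → ρ) (e : Perm ι) : content (f ∘ e) = content f :=
  Equiv.sum_comp e fun j => Finsupp.single (f j) 1

lemma content_comp {σ : Type*} (g : ρ → σ) (f : ι → ρ) :
    content (g ∘ f) = (content f).mapDomain g := by
  simp [content, Finsupp.mapDomain_finsetSum]

lemma degree_content (f : ι → ρ) : (content f).degree = Fintype.card ι := by
  simp [content, map_sum]

lemma prod_X_eq_monomial_content (R : Type*) [CommSemiring R] (f : ι → ρ) :
    ∏ j, X (f j) = monomial (content f) (1 : R) := by
  simp [content, monomial_sum_one, X]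

lemma exists_comp_perm_eq_of_content_eq {f g : ι → ρ} (h : content f = content g) :
    ∃ e : Perm ι, g ∘ e = f := by
  classical
  have fiber_card (m : ρ) : Fintype.card {j // f j = m} = Fintype.card {j // g j = m} := by
    simpa [Fintype.card_subtype, content_apply] using DFunLike.congr_fun h m
  exact ⟨Equiv.ofFiberEquiv fun m => Fintype.equivOfCardEq (fiber_card m),
    funext fun j => Equiv.ofFiberEquiv_map _ j⟩

lemma exists_content_eq (n : ρ →₀ ℕ) (hn : n.degree = Fintype.card ι) :
    ∃ f : ι → ρ, content f = n := by
  have e : ι ≃ Fin n.toMultiset.toList.length :=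
    Fintype.equivOfCardEq (by simp [← hn, Finsupp.degree_apply, Finsupp.sum])
  refine ⟨fun j => n.toMultiset.toList.get (e j), Multiset.toFinsupp.symm.injective ?_⟩
  rw [content, Equiv.sum_comp e fun j => Finsupp.single (n.toMultiset.toList.get j) 1, map_sum]
  simp

variable [DecidableEq ι] [DecidableEq ρ]

lemma card_stabilizer_eq {f g : ι → ρ} (h : content f = content g) :
    #{π : Perm ι | f ∘ π = f} = #{π : Perm ι | g ∘ π = f} := by
  obtain ⟨e, rfl⟩ := exists_comp_perm_eq_of_content_eq h
  refine card_equiv (Equiv.mulLeft e) fun π => ?_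
  simp [Function.comp_assoc]

variable [Fintype ρ]

lemma sum_card_stabilizer (n : ρ →₀ ℕ) (hn : n.degree = Fintype.card ι) :
    ∑ f : ι → ρ with content f = n, #{π : Perm ι | f ∘ π = f} = (Fintype.card ι)! := by
  obtain ⟨g, rfl⟩ := exists_content_eq n hn
  calc ∑ f : ι → ρ with content f = content g, #{π : Perm ι | f ∘ π = f}
      = ∑ f : ι → ρ with content f = content g, #{π : Perm ι | g ∘ π = f} :=
        sum_congr rfl fun f hf => card_stabilizer_eq (mem_filter.1 hf).2
    _ = #(univ : Finset (Perm ι)) :=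
        (card_eq_sum_card_fiberwise fun π _ => by simp [content_comp_perm]).symm
    _ = (Fintype.card ι)! := Fintype.card_perm

-- Burnside's count: the words of a given content form a single orbit of `Perm ι`.
lemma sum_fixed_words {M : Type*} [AddCommMonoid M] (F : (ρ →₀ ℕ) → M) :
    ∑ π : Perm ι, ∑ f : ι → ρ with f ∘ π = f, F (content f) =
      (Fintype.card ι)! • ∑ n ∈ finsuppAntidiag univ (Fintype.card ι), F n := by
  calc ∑ π : Perm ι, ∑ f : ι → ρ with f ∘ π = f, F (content f)
      = ∑ f : ι → ρ, #{π : Perm ι | f ∘ π = f} • F (content f) := by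
        simp only [sum_filter]
        rw [sum_comm]
        simp only [← sum_filter, sum_const]
    _ = ∑ n ∈ finsuppAntidiag univ (Fintype.card ι), ∑ f : ι → ρ with content f = n,
          #{π : Perm ι | f ∘ π = f} • F (content f) :=
        (sum_fiberwise_of_maps_to (fun f _ => by
          simp [mem_finsuppAntidiag, ← degree_content f, Finsupp.degree_eq_sum]) _).symm
    _ = (Fintype.card ι)! • ∑ n ∈ finsuppAntidiag univ (Fintype.card ι), F n := by
        rw [smul_sum]
        refine sum_congr rfl fun n hn => ?_
        rw [← sum_card_stabilizer n
          (by simpa [mem_finsuppAntidiag, Finsupp.degree_eq_sum] using hn), sum_smul]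
        exact sum_congr rfl fun f hf => by rw [(mem_filter.1 hf).2]

end Words

section PowerSums

open MvPolynomial Equiv Equiv.Perm

lemma isConj_perm_inv {ι : Type*} [Finite ι] (π : Perm ι) : IsConj π π⁻¹ := by
  cases nonempty_fintype ι
  exact isConj_iff_cycleType_eq.2 (cycleType_inv π).symm

variable {ι : Type*} [Fintype ι] [DecidableEq ι]

/-- The orbits of a permutation: its nontrivial cycles and its fixed points. -/
abbrev Orbit (π : Perm ι) : Type _ := {c // c ∈ π.cycleFactorsFinset} ⊕ {i // π i = i}

/-- The orbit of the point `i` under `π`. -/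
def orbitOf (π : Perm ι) (i : ι) : Orbit π :=
  if h : π i = i then .inr ⟨i, h⟩
  else .inl ⟨π.cycleOf i, cycleOf_mem_cycleFactorsFinset_iff.2 (mem_support.2 h)⟩

lemma orbitOf_eq_inr_iff (π : Perm ι) (i : ι) (j : {j // π j = j}) :
    orbitOf π i = .inr j ↔ i = j := by
  unfold orbitOf
  split_ifs with h
  · simp [Subtype.ext_iff]
  · simp only [false_iff]
    rintro rfl
    exact h j.2

lemma orbitOf_eq_inl_iff (π : Perm ι) (i : ι) (c : {c // c ∈ π.cycleFactorsFinset}) :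
    orbitOf π i = .inl c ↔ i ∈ (c : Perm ι).support := by
  unfold orbitOf
  split_ifs with h
  · simp only [false_iff]
    exact fun hi => mem_support.1 (mem_cycleFactorsFinset_support_le c.2 hi) h
  · simp only [Sum.inl.injEq, Subtype.ext_iff]
    refine ⟨fun hc => ?_, fun hi => (cycle_is_cycleOf hi c.2).symm⟩
    rw [← hc, mem_support_cycleOf_iff, mem_support]
    exact ⟨SameCycle.refl _ _, h⟩

lemma orbitOf_surjective (π : Perm ι) : Function.Surjective (orbitOf π) := by
  rintro (c | j)
  · obtain ⟨i, hi⟩ := (mem_cycleFactorsFinset_iff.1 c.2).1.nonempty_support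
    exact ⟨i, (orbitOf_eq_inl_iff π i c).2 hi⟩
  · exact ⟨j, (orbitOf_eq_inr_iff π _ j).2 rfl⟩

lemma orbitOf_eq_iff (π : Perm ι) (i j : ι) : orbitOf π i = orbitOf π j ↔ π.SameCycle i j := by
  rcases hj : orbitOf π j with c | y
  · rw [orbitOf_eq_inl_iff] at hj ⊢
    rw [cycle_is_cycleOf hj c.2, mem_support_cycleOf_iff, sameCycle_comm]
    exact and_iff_left (mem_cycleFactorsFinset_support_le c.2 hj)
  · rw [orbitOf_eq_inr_iff] at hj ⊢
    subst hj
    exact ⟨fun h => h ▸ .refl _ _, fun h => ((h.symm.eq_of_left y.2)).symm⟩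

lemma comp_eq_iff_factors_orbitOf {ρ : Type*} (π : Perm ι) (f : ι → ρ) :
    f ∘ π = f ↔ f.FactorsThrough (orbitOf π) := by
  refine ⟨fun hf i j hij => ?_, fun hf => funext fun i => hf ?_⟩
  · have word_pow (n : ℕ) : f ((π ^ n) i) = f i := by
      induction n with
      | zero => rfl
      | succ n ih => rw [_root_.pow_succ', Perm.mul_apply, ← ih]; exact congrFun hf _
    obtain ⟨n, rfl⟩ := ((orbitOf_eq_iff π i j).1 hij).exists_nat_pow_eq
    exact (word_pow n).symm
  · rw [orbitOf_eq_iff]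
    exact sameCycle_apply_left.2 (.refl _ _)

/-- The power sum product `p_τ` in the variables `ρ`, where `τ` is the full cycle type of `π`. -/
abbrev cyclePowerSum (ρ : Type*) [Fintype ρ] (π : Perm ι) : MvPolynomial ρ ℤ :=
  psumPart ρ ℤ π.partition

variable {ρ : Type*} [Fintype ρ]

lemma cyclePowerSum_eq_prod_orbits (π : Perm ι) :
    cyclePowerSum ρ π = ∏ o : Orbit π, psum ρ ℤ #{i | orbitOf π i = o} := by
  have cycle_size (c : {c // c ∈ π.cycleFactorsFinset}) :
      ({i | orbitOf π i = .inl c} : Finset ι) = (c : Perm ι).support := by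
    ext i; simp [orbitOf_eq_inl_iff]
  have fixed_size (j : {j // π j = j}) : ({i | orbitOf π i = .inr j} : Finset ι) = {(j : ι)} := by
    ext i; simp [orbitOf_eq_inr_iff]
  have card_fixed : Fintype.card ι - #π.support = Fintype.card {i // π i = i} := by
    rw [← card_compl, Fintype.card_subtype]
    congr 1; ext; simp
  rw [cyclePowerSum, psumPart, parts_partition, Multiset.map_add, Multiset.prod_add,
    Multiset.map_replicate, Multiset.prod_replicate, card_fixed, cycleType_def, Multiset.map_map,
    Fintype.prod_sum_type]
  simp only [cycle_size, fixed_size, card_singleton, prod_const, Finset.card_univ]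
  congr 1
  exact (prod_coe_sort π.cycleFactorsFinset fun c => psum ρ ℤ (#c.support)).symm

lemma cyclePowerSum_isSymmetric (π : Perm ι) : (cyclePowerSum ρ π).IsSymmetric := by
  intro e
  simp [psumPart, map_multiset_prod]

lemma cyclePowerSum_congr_of_isConj {π π' : Perm ι} (h : IsConj π π') :
    cyclePowerSum ρ π = cyclePowerSum ρ π' := by
  rw [cyclePowerSum, partition_eq_of_isConj.1 h]

variable [DecidableEq ρ]

lemma cyclePowerSum_eq_sum_fixed_words (π : Perm ι) :
    cyclePowerSum ρ π = ∑ f : ι → ρ with f ∘ π = f, monomial (content f) 1 := by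
  simp only [cyclePowerSum_eq_prod_orbits, psum, prod_univ_sum, Fintype.piFinset_univ,
    ← prod_X_eq_monomial_content]
  refine sum_bij (fun g _ => g ∘ orbitOf π) (fun g _ => ?_)
    (fun g _ g' _ h => (orbitOf_surjective π).injective_comp_right h) (fun f hf => ?_)
    (fun g _ => ?_)
  · simp only [mem_filter, mem_univ, true_and, comp_eq_iff_factors_orbitOf]
    exact fun i j h => congrArg g h
  · rw [mem_filter, comp_eq_iff_factors_orbitOf] at hf
    refine ⟨f ∘ Function.surjInv (orbitOf_surjective π), mem_univ _, funext fun i => hf.2 ?_⟩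
    exact Function.surjInv_eq _ _
  · rw [← prod_fiberwise univ (orbitOf π)]
    refine prod_congr rfl fun o _ => ?_
    rw [← prod_const]
    exact prod_congr rfl fun i hi => by simp [(mem_filter.1 hi).2]

lemma coeff_cyclePowerSum (π : Perm ι) (ν : ρ →₀ ℕ) :
    (cyclePowerSum ρ π).coeff ν = #{f : ι → ρ | f ∘ π = f ∧ content f = ν} := by
  rw [cyclePowerSum_eq_sum_fixed_words, coeff_sum]
  simp [coeff_monomial, sum_boole, filter_filter]

end PowerSums

section CompleteHomogeneous

open MvPolynomial Equiv

/-- The generating function `∏ j, 1 / (1 - x j * t)` of the complete homogeneous symmetric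
polynomials in the values `x`. -/
def completeSeries {σ R : Type*} [Fintype σ] [CommSemiring R] (x : σ → R) : PowerSeries R :=
  ∏ j, PowerSeries.mk fun n => x j ^ n

variable {ρ σ : Type*}

lemma mapDomain_fst_apply [Fintype σ] (n : ρ × σ →₀ ℕ) (i : ρ) :
    n.mapDomain Prod.fst i = ∑ j, n (i, j) := by
  induction n using Finsupp.induction_linear with
  | zero => simp
  | add n n' hn hn' => simp [Finsupp.mapDomain_add, hn, hn', sum_add_distrib]
  | single p m => simp [Finsupp.single_apply, Prod.ext_iff, ite_and]

lemma mapDomain_snd_apply [Fintype ρ] (n : ρ × σ →₀ ℕ) (j : σ) :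
    n.mapDomain Prod.snd j = ∑ i, n (i, j) := by
  induction n using Finsupp.induction_linear with
  | zero => simp
  | add n n' hn hn' => simp [Finsupp.mapDomain_add, hn, hn', sum_add_distrib]
  | single p m => simp [Finsupp.single_apply, Prod.ext_iff, ite_and]

variable [Fintype σ]

lemma coeff_completeSeries_X [DecidableEq σ] (R : Type*) [CommSemiring R] (n : ℕ) :
    (completeSeries (X : σ → MvPolynomial σ R)).coeff n =
      ∑ m ∈ finsuppAntidiag univ n, monomial m 1 := by
  simp only [completeSeries, PowerSeries.coeff_prod, PowerSeries.coeff_mk]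
  exact sum_congr rfl fun m _ => by rw [monomial_eq]; simp [Finsupp.prod_fintype]

variable [Fintype ρ]

lemma prod_coeff_completeSeries_X [DecidableEq ρ] [DecidableEq σ] (R : Type*) [CommSemiring R]
    (ν : ρ →₀ ℕ) :
    ∏ i, (completeSeries (X : σ → MvPolynomial σ R)).coeff (ν i) =
      ∑ n ∈ finsuppAntidiag (univ : Finset (ρ × σ)) ν.degree with n.mapDomain Prod.fst = ν,
        monomial (n.mapDomain Prod.snd) (1 : R) := by
  simp only [coeff_completeSeries_X, prod_univ_sum, ← monomial_sum_one]
  have mem_iff (n : ρ × σ →₀ ℕ) : n.mapDomain Prod.fst = ν ↔ ∀ i, ∑ j, n (i, j) = ν i := by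
    simp [Finsupp.ext_iff, mapDomain_fst_apply]
  refine sum_equiv (Finsupp.equivFunOnFinite.symm.trans Finsupp.curryEquiv.symm)
    (fun p => ?_) (fun p _ => ?_)
  · simp only [Fintype.mem_piFinset, mem_finsuppAntidiag, subset_univ, and_true, mem_iff,
      Finsupp.degree_eq_sum, trans_apply, Finsupp.curryEquiv_symm_apply, mem_filter,
      Fintype.sum_prod_type, Finsupp.uncurry_apply_pair, Finsupp.equivFunOnFinite_symm_apply_apply,
      iff_and_self]
    exact fun h => sum_congr rfl fun i _ => h i
  · refine congrArg (fun m => monomial m (1 : R)) (Finsupp.ext fun j => ?_)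
    simp [mapDomain_snd_apply, Finsupp.finsetSum_apply]

lemma sum_coeff_smul_cyclePowerSum {ι : Type*} [Fintype ι] [DecidableEq ι] (ν : ρ →₀ ℕ)
    (hν : ν.degree = Fintype.card ι) :
    ∑ π : Perm ι, (cyclePowerSum ρ π).coeff ν • cyclePowerSum σ π =
      (Fintype.card ι)! • ∏ i, (completeSeries (X : σ → MvPolynomial σ ℤ)).coeff (ν i) := by
  rw [prod_coeff_completeSeries_X, hν, sum_filter, ← sum_fixed_words]
  refine sum_congr rfl fun π _ => ?_
  rw [cyclePowerSum_eq_sum_fixed_words π (ρ := σ), cyclePowerSum_eq_sum_fixed_words π (ρ := ρ)]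
  simp only [coeff_sum, coeff_monomial, sum_smul, smul_sum, ← sum_product', ite_smul, one_smul,
    zero_smul]
  refine sum_equiv ((Equiv.prodComm _ _).trans
    (Equiv.arrowProdEquivProdArrow ι (fun _ => ρ) fun _ => σ).symm) (fun w => ?_) (fun w _ => ?_)
  · simp [_root_.funext_iff, Prod.ext_iff, forall_and, and_comm, Equiv.arrowProdEquivProdArrow]
  · simp [← content_comp, Function.comp_def, Equiv.arrowProdEquivProdArrow]

end CompleteHomogeneous

section JacobiTrudi

open Matrix

variable {d : ℕ} {R : Type*} [CommRing R]

/-- The exponent `δ = (d-1, ..., 1, 0)` of the Vandermonde determinant. -/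
def staircase (d : ℕ) : Fin d →₀ ℕ := Finsupp.equivFunOnFinite.symm fun j => d - 1 - j

@[simp]
lemma staircase_apply (j : Fin d) : staircase d j = d - 1 - j := rfl

lemma staircase_strictAnti : StrictAnti (staircase d) := fun i j hij => by
  have : (i : ℕ) < j := hij
  simp only [staircase_apply]
  omega

/-- The alternant `a_α(x) = det (x_i ^ α_j)`; the Schur polynomial `s_λ` is `a_{λ+δ} / a_δ`. -/
def alternant (x : Fin d → R) (α : Fin d → ℕ) : R := (of fun i j => x i ^ α j).det

/-- The Jacobi–Trudi matrix `(h_{α_i - δ_j})`, with `h_m = 0` for negative `m`. -/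
def jacobiTrudi (x : Fin d → R) (α : Fin d → ℕ) : Matrix (Fin d) (Fin d) R :=
  of fun i j => (PowerSeries.X ^ staircase d j * completeSeries x).coeff (α i)

/-- The coefficients of the polynomials `∏_{m ≠ l} (1 - x_m t)`, read off at the exponents `δ`. -/
def deletedElementary (x : Fin d → R) : Matrix (Fin d) (Fin d) R :=
  of fun j l => (∏ m ∈ univ.erase l, (1 - Polynomial.C (x m) * Polynomial.X)).coeff (staircase d j)

lemma mk_pow_mul_one_sub (a : R) :
    (PowerSeries.mk fun n => a ^ n) * (1 - PowerSeries.C a * PowerSeries.X) = 1 := by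
  ext (_ | n) <;> simp [mul_sub, ← mul_assoc, PowerSeries.coeff_succ_mul_X, _root_.pow_succ]

lemma constantCoeff_completeSeries (x : Fin d → R) :
    (completeSeries x).constantCoeff = 1 := by
  simp [completeSeries, map_prod, ← PowerSeries.coeff_zero_eq_constantCoeff_apply]

lemma completeSeries_mul_prod_erase (x : Fin d → R) (l : Fin d) :
    completeSeries x * ∏ m ∈ univ.erase l, (1 - PowerSeries.C (x m) * PowerSeries.X) =
      PowerSeries.mk fun n => x l ^ n := by
  rw [completeSeries, ← mul_prod_erase univ _ (mem_univ l), mul_assoc, ← prod_mul_distrib]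
  simp [mk_pow_mul_one_sub]

lemma sum_coeff_staircase_mul_X_pow (p : Polynomial R) (hp : p.natDegree < d) :
    ∑ j, PowerSeries.C (p.coeff (staircase d j)) * PowerSeries.X ^ staircase d j =
      (p : PowerSeries R) := by
  conv_rhs => rw [p.as_sum_range' d hp, ← sum_range_reflect, sum_range]
  rw [← Polynomial.coeToPowerSeries.ringHom_apply, map_sum]
  simp [← Polynomial.C_mul_X_pow_eq_monomial]

lemma jacobiTrudi_mul_deletedElementary (x : Fin d → R) (α : Fin d → ℕ) :
    jacobiTrudi x α * deletedElementary x = of fun i l => x l ^ α i := by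
  ext i l
  set p : Polynomial R := ∏ m ∈ univ.erase l, (1 - Polynomial.C (x m) * Polynomial.X) with hp
  have natDegree_lt : p.natDegree < d := by
    refine (Polynomial.natDegree_prod_le _ _).trans_lt ?_
    have factor_degree (m : Fin d) : (1 - Polynomial.C (x m) * Polynomial.X).natDegree ≤ 1 := by
      compute_degree
    refine (sum_le_card_nsmul _ _ 1 fun m _ => factor_degree m).trans_lt ?_
    simp [l.pos]
  have coe_p : (p : PowerSeries R) =
      ∏ m ∈ univ.erase l, (1 - PowerSeries.C (x m) * PowerSeries.X) := by
    rw [hp, ← Polynomial.coeToPowerSeries.ringHom_apply, map_prod]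
    simp
  calc (jacobiTrudi x α * deletedElementary x) i l
      = (∑ j, PowerSeries.C (p.coeff (staircase d j)) * PowerSeries.X ^ staircase d j *
          completeSeries x).coeff (α i) := by
        simp only [Matrix.mul_apply, jacobiTrudi, deletedElementary, of_apply, map_sum, mul_assoc,
          PowerSeries.coeff_C_mul, ← hp]
        exact sum_congr rfl fun j _ => mul_comm _ _
    _ = (completeSeries x * p).coeff (α i) := by
        rw [← sum_mul, sum_coeff_staircase_mul_X_pow p natDegree_lt, mul_comm]
    _ = x l ^ α i := by
        rw [coe_p, completeSeries_mul_prod_erase, PowerSeries.coeff_mk]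

lemma det_jacobiTrudi_staircase (x : Fin d → R) : (jacobiTrudi x (staircase d)).det = 1 := by
  rw [Matrix.det_of_isUpperTriangular fun i j hij => ?_]
  · refine prod_eq_one fun i _ => ?_
    rw [jacobiTrudi, of_apply, PowerSeries.coeff_X_pow_mul', if_pos le_rfl, Nat.sub_self,
      PowerSeries.coeff_zero_eq_constantCoeff_apply, constantCoeff_completeSeries]
  · rw [jacobiTrudi, of_apply, PowerSeries.coeff_X_pow_mul', if_neg]
    exact (staircase_strictAnti hij).not_ge

theorem det_jacobiTrudi_mul_alternant (x : Fin d → R) (α : Fin d → ℕ) :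
    (jacobiTrudi x α).det * alternant x (staircase d) = alternant x α := by
  have det_mul (β : Fin d → ℕ) : (jacobiTrudi x β).det * (deletedElementary x).det =
      alternant x β := by
    rw [← Matrix.det_mul, jacobiTrudi_mul_deletedElementary, alternant, ← Matrix.det_transpose]
    rfl
  rw [← det_mul (staircase d), det_jacobiTrudi_staircase, one_mul, det_mul]

end JacobiTrudi

section FrobeniusCoefficients

open MvPolynomial Equiv

variable {d : ℕ}

lemma alternant_X_eq_sum (α : Fin d →₀ ℕ) :
    alternant (X : Fin d → MvPolynomial (Fin d) ℤ) α =
      ∑ σ : Perm (Fin d), monomial (α.equivMapDomain σ) (Perm.sign σ : ℤ) := by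
  rw [alternant, Matrix.det_apply']
  refine sum_congr rfl fun σ _ => ?_
  rw [monomial_eq, Finsupp.prod_fintype _ _ (by simp), ← Equiv.prod_comp σ.symm]
  simp

lemma equivMapDomain_eq_iff {α β : Fin d →₀ ℕ} (hα : StrictAnti α) (hβ : StrictAnti β)
    (σ : Perm (Fin d)) : α.equivMapDomain σ = β ↔ α = β ∧ σ = 1 := by
  refine ⟨fun h => ?_, fun h => by rw [h.2, ← h.1]; exact α.equivMapDomain_refl⟩
  have coe_eq : α ∘ σ.symm = β := funext fun i => by simp [← h]
  have range_eq : Set.range α = Set.range β := by rw [← coe_eq, σ.symm.surjective.range_comp]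
  have hαβ : α = β := DFunLike.coe_injective ((hα.range_inj hβ).1 range_eq)
  subst hαβ
  refine ⟨rfl, Equiv.ext fun i => hα.injective ?_⟩
  simpa using (congrFun coe_eq (σ i)).symm

lemma coeff_alternant_X {α β : Fin d →₀ ℕ} (hα : StrictAnti α) (hβ : StrictAnti β) :
    (alternant (X : Fin d → MvPolynomial (Fin d) ℤ) α).coeff β = if α = β then 1 else 0 := by
  simp only [alternant_X_eq_sum, coeff_sum, coeff_monomial, equivMapDomain_eq_iff hα hβ]
  split_ifs with h <;> simp [h]

variable {ι : Type*} [Fintype ι] [DecidableEq ι]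

/-- The coefficient of `x ^ α` in `p_τ a_δ`, where `τ` is the cycle type of `π`. Frobenius'
formula says that for `α = λ + δ` it is the value of the irreducible character `χ_λ`. -/
def frobeniusCoeff (α : Fin d →₀ ℕ) (π : Perm ι) : ℤ :=
  (cyclePowerSum (Fin d) π * alternant X (staircase d)).coeff α

lemma frobeniusCoeff_eq_sum (α : Fin d →₀ ℕ) (π : Perm ι) :
    frobeniusCoeff α π = ∑ σ : Perm (Fin d),
      if (staircase d).equivMapDomain σ ≤ α then
        (Perm.sign σ : ℤ) * (cyclePowerSum (Fin d) π).coeff (α - (staircase d).equivMapDomain σ)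
      else 0 := by
  simp only [frobeniusCoeff, alternant_X_eq_sum, mul_sum, coeff_sum, coeff_mul_monomial', mul_comm]

lemma degree_sub_equivMapDomain_staircase {α : Fin d →₀ ℕ} {σ : Perm (Fin d)}
    (hσ : (staircase d).equivMapDomain σ ≤ α) :
    (α - (staircase d).equivMapDomain σ).degree + (staircase d).degree = α.degree := by
  conv_rhs => rw [← tsub_add_cancel_of_le hσ, map_add]
  simp only [Finsupp.degree_eq_sum, Finsupp.equivMapDomain_apply, Nat.add_left_cancel_iff]
  exact (Equiv.sum_comp σ.symm (staircase d)).symm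

lemma coeff_cyclePowerSum_eq_zero {ρ : Type*} [Fintype ρ] (π : Perm ι)
    {ν : ρ →₀ ℕ} (hν : ν.degree ≠ Fintype.card ι) : (cyclePowerSum ρ π).coeff ν = 0 := by
  rw [coeff_cyclePowerSum, Nat.cast_eq_zero, Finset.card_eq_zero, filter_eq_empty_iff]
  rintro f - ⟨-, rfl⟩
  exact hν (degree_content f)

lemma frobeniusCoeff_eq_zero {α : Fin d →₀ ℕ} (π : Perm ι)
    (hα : α.degree ≠ Fintype.card ι + (staircase d).degree) : frobeniusCoeff α π = 0 := by
  rw [frobeniusCoeff_eq_sum]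
  refine sum_eq_zero fun σ _ => ite_eq_right_iff.2 fun hσ => ?_
  rw [coeff_cyclePowerSum_eq_zero, mul_zero]
  exact fun h => hα (by rw [← h, degree_sub_equivMapDomain_staircase hσ])

lemma sum_frobeniusCoeff_smul_cyclePowerSum {α : Fin d →₀ ℕ}
    (hα : α.degree = Fintype.card ι + (staircase d).degree) :
    ∑ π : Perm ι, frobeniusCoeff α π • cyclePowerSum (Fin d) π =
      (Fintype.card ι)! • (jacobiTrudi X α).det := by
  have jacobiTrudi_term (σ : Perm (Fin d)) :
      ∏ i, jacobiTrudi (X : Fin d → MvPolynomial (Fin d) ℤ) α (σ i) i =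
        if (staircase d).equivMapDomain σ ≤ α then
          ∏ i, (completeSeries X).coeff ((α - (staircase d).equivMapDomain σ) i) else 0 := by
    have le_iff : (staircase d).equivMapDomain σ ≤ α ↔ ∀ i ∈ univ, staircase d i ≤ α (σ i) := by
      rw [Finsupp.le_def, ← σ.forall_congr_right]
      simp
    simp only [jacobiTrudi, Matrix.of_apply, PowerSeries.coeff_X_pow_mul', prod_ite_zero, le_iff]
    rw [← Equiv.prod_comp σ.symm]
    simp
  simp only [frobeniusCoeff_eq_sum, sum_smul, Matrix.det_apply', smul_sum, jacobiTrudi_term]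
  rw [sum_comm]
  refine sum_congr rfl fun σ _ => ?_
  split_ifs with hσ
  · have hdeg : (α - (staircase d).equivMapDomain σ).degree = Fintype.card ι := by
      have := degree_sub_equivMapDomain_staircase hσ
      omega
    simp only [mul_smul, ← smul_sum, sum_coeff_smul_cyclePowerSum _ hdeg]
    rw [zsmul_eq_mul, mul_smul_comm]
  · simp

theorem sum_frobeniusCoeff_sq {α : Fin d →₀ ℕ} (hanti : StrictAnti α)
    (hα : α.degree = Fintype.card ι + (staircase d).degree) :
    ∑ π : Perm ι, frobeniusCoeff α π ^ 2 = (Fintype.card ι)! := by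
  calc ∑ π : Perm ι, frobeniusCoeff α π ^ 2
      = ((∑ π : Perm ι, frobeniusCoeff α π • cyclePowerSum (Fin d) π) *
          alternant X (staircase d)).coeff α := by
        simp only [sum_mul, smul_mul_assoc, coeff_sum, coeff_smul, smul_eq_mul, frobeniusCoeff, sq]
    _ = (Fintype.card ι)! := by
        rw [sum_frobeniusCoeff_smul_cyclePowerSum hα, smul_mul_assoc,
          det_jacobiTrudi_mul_alternant, coeff_smul, coeff_alternant_X hanti hanti]
        simp

lemma frobeniusCoeff_congr_of_isConj (α : Fin d →₀ ℕ) {π π' : Perm ι} (h : IsConj π π') :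
    frobeniusCoeff α π = frobeniusCoeff α π' := by
  rw [frobeniusCoeff, frobeniusCoeff, cyclePowerSum_congr_of_isConj h]

end FrobeniusCoefficients

section Expansion

open MvPolynomial Equiv

variable {d : ℕ}

/-- Alternating polynomials: a permutation of the variables multiplies them by its sign. -/
def IsAlternating (Q : MvPolynomial (Fin d) ℤ) : Prop :=
  ∀ σ : Perm (Fin d), rename σ Q = (Perm.sign σ : ℤ) • Q

namespace IsAlternating

variable {Q Q' : MvPolynomial (Fin d) ℤ}

lemma sub (hQ : IsAlternating Q) (hQ' : IsAlternating Q') : IsAlternating (Q - Q') := fun σ => by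
  rw [map_sub, hQ, hQ', smul_sub]

lemma smul (c : ℤ) (hQ : IsAlternating Q) : IsAlternating (c • Q) := fun σ => by
  rw [map_zsmul, hQ, smul_comm]

lemma sum {κ : Type*} (s : Finset κ) {Q : κ → MvPolynomial (Fin d) ℤ}
    (hQ : ∀ i ∈ s, IsAlternating (Q i)) : IsAlternating (∑ i ∈ s, Q i) := fun σ => by
  rw [map_sum, smul_sum]
  exact sum_congr rfl fun i hi => hQ i hi σ

lemma symmetric_mul {P : MvPolynomial (Fin d) ℤ} (hP : P.IsSymmetric) (hQ : IsAlternating Q) :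
    IsAlternating (P * Q) := fun σ => by
  rw [map_mul, hP, hQ, mul_smul_comm]

lemma coeff_comp_perm (hQ : IsAlternating Q) (α : Fin d →₀ ℕ) (σ : Perm (Fin d)) :
    Q.coeff (α.equivMapDomain σ) = Perm.sign σ * Q.coeff α := by
  have h := coeff_rename_mapDomain σ σ.injective Q α
  rw [hQ σ, coeff_smul, smul_eq_mul, ← Finsupp.equivMapDomain_eq_mapDomain] at h
  rw [← h, ← mul_assoc, ← Units.val_mul, Int.units_mul_self, Units.val_one, one_mul]

lemma coeff_eq_zero_of_not_injective (hQ : IsAlternating Q) {α : Fin d →₀ ℕ}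
    (hα : ¬ Function.Injective α) : Q.coeff α = 0 := by
  simp only [Function.Injective, not_forall] at hα
  obtain ⟨i, j, hij, hne⟩ := hα
  have swap_eq : α.equivMapDomain (Equiv.swap i j) = α := by
    ext m
    rw [Finsupp.equivMapDomain_apply, Equiv.symm_swap, Equiv.swap_apply_def]
    split_ifs <;> simp_all
  have h := hQ.coeff_comp_perm α (Equiv.swap i j)
  rw [swap_eq, Perm.sign_swap hne] at h
  simp only [Units.val_neg, Units.val_one, neg_mul, one_mul] at h
  omega

lemma eq_zero (hQ : IsAlternating Q) (h : ∀ α : Fin d →₀ ℕ, StrictAnti α → Q.coeff α = 0) :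
    Q = 0 := by
  ext α
  rw [coeff_zero]
  by_cases hα : Function.Injective α
  · set σ := Tuple.sort (OrderDual.toDual ∘ α)
    have hanti : StrictAnti (α.equivMapDomain σ.symm) :=
      (Tuple.monotone_sort (OrderDual.toDual ∘ α)).strictMono_of_injective
        (hα.comp σ.injective)
    simpa [hQ.coeff_comp_perm] using h _ hanti
  · exact hQ.coeff_eq_zero_of_not_injective hα

end IsAlternating

lemma isAlternating_alternant (α : Fin d → ℕ) : IsAlternating (alternant X α) := fun σ => by
  have permute_rows : (rename σ).mapMatrix (Matrix.of fun i j : Fin d => X (R := ℤ) i ^ α j) =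
      (Matrix.of fun i j : Fin d => X i ^ α j).submatrix σ id := by
    ext1 i j
    simp
  rw [alternant, AlgHom.map_det, permute_rows, Matrix.det_permute, zsmul_eq_mul]

/-- The partitions of `k` into at most `d` parts, as weakly decreasing exponent vectors. -/
def partitionVectors (d k : ℕ) : Finset (Fin d →₀ ℕ) :=
  {l ∈ finsuppAntidiag univ k | Antitone l}

lemma mem_partitionVectors {k : ℕ} {l : Fin d →₀ ℕ} :
    l ∈ partitionVectors d k ↔ l.degree = k ∧ Antitone l := by
  simp [partitionVectors, mem_finsuppAntidiag, Finsupp.degree_eq_sum]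

lemma strictAnti_add_staircase {l : Fin d →₀ ℕ} (hl : Antitone l) :
    StrictAnti (l + staircase d) :=
  hl.add_strictAnti staircase_strictAnti

lemma exists_antitone_add_staircase_eq {α : Fin d →₀ ℕ} (hα : StrictAnti α) :
    ∃ l : Fin d →₀ ℕ, Antitone l ∧ l + staircase d = α := by
  have gap {i j : Fin d} (hij : i ≤ j) : α j + (j - i : ℕ) ≤ α i := by
    have values_subset : (Finset.Icc i j).image α ⊆ Finset.Icc (α j) (α i) :=
      image_subset_iff.2 fun m hm => mem_Icc.2
        ⟨hα.antitone (mem_Icc.1 hm).2, hα.antitone (mem_Icc.1 hm).1⟩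
    have hcard := card_le_card values_subset
    rw [card_image_of_injective _ hα.injective, Fin.card_Icc, Nat.card_Icc] at hcard
    have : (i : ℕ) ≤ j := hij
    omega
  refine ⟨α - staircase d, fun i j hij => ?_, tsub_add_cancel_of_le fun i => ?_⟩
  · have := gap hij
    have : (i : ℕ) ≤ j := hij
    simp only [Finsupp.tsub_apply, staircase_apply]
    omega
  · have := gap (show i ≤ ⟨d - 1, Nat.sub_one_lt_of_lt i.2⟩ from Nat.le_sub_one_of_lt i.2)
    simp only [staircase_apply]
    dsimp only at this
    omega

theorem cyclePowerSum_mul_alternant {ι : Type*} [Fintype ι] [DecidableEq ι] (π : Perm ι) :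
    cyclePowerSum (Fin d) π * alternant X (staircase d) =
      ∑ l ∈ partitionVectors d (Fintype.card ι),
        frobeniusCoeff (l + staircase d) π • alternant X (l + staircase d) := by
  refine sub_eq_zero.1 (IsAlternating.eq_zero (.sub ?_ (.sum _ fun l _ => .smul _ ?_)) ?_)
  · exact .symmetric_mul (cyclePowerSum_isSymmetric π) (isAlternating_alternant _)
  · exact isAlternating_alternant _
  intro α hα
  obtain ⟨m, hm, rfl⟩ := exists_antitone_add_staircase_eq hα
  have coeff_term : ∀ l ∈ partitionVectors d (Fintype.card ι),
      coeff (m + staircase d) (frobeniusCoeff (l + staircase d) π • alternant X (l + staircase d)) =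
        if l = m then frobeniusCoeff (m + staircase d) π else 0 := by
    intro l hl
    rw [coeff_smul, coeff_alternant_X
      (strictAnti_add_staircase (mem_partitionVectors.1 hl).2) hα]
    by_cases h : l = m <;> simp [h]
  rw [coeff_sub, coeff_sum, sum_congr rfl coeff_term, sum_ite_eq', ← frobeniusCoeff]
  split_ifs with hmem
  · exact sub_self _
  · rw [sub_zero]
    refine frobeniusCoeff_eq_zero π fun h => hmem (mem_partitionVectors.2 ⟨?_, hm⟩)
    simpa using h

end Expansion

section Tableaux

open Equiv Equiv.Perm

variable {ι ρ γ : Type*}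

/-- A filling of a Young diagram, where the box with label `j` lies in row `r j` and column `c j`:
distinct labels occupy distinct boxes, and every column is filled from the first row on. -/
structure IsTableau [LT ρ] (r : ι → ρ) (c : ι → γ) : Prop where
  injective : Function.Injective fun j => (r j, c j)
  exists_above : ∀ j, ∀ m < r j, ∃ i, r i = m ∧ c i = c j

/-- The permutations preserving the fibers of `c`. The row group and the column group of a tableau
are of this form. -/
def fiberPerm (c : ι → γ) : Subgroup (Perm ι) where
  carrier := {π | c ∘ π = c}
  mul_mem' {π π'} (h : c ∘ π = c) (h' : c ∘ π' = c) := by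
    change (c ∘ π) ∘ π' = c
    rw [h, h']
  one_mem' := rfl
  inv_mem' {π} (h : c ∘ π = c) := by
    change c ∘ π.symm = c
    rw [Equiv.comp_symm_eq, h]

lemma mem_fiberPerm {c : ι → γ} {π : Perm ι} : π ∈ fiberPerm c ↔ c ∘ π = c := Iff.rfl

lemma exists_swap_mem_fiberPerm [DecidableEq ι] {f : ι → ρ} {c : ι → γ}
    (hf : ¬ Function.Injective fun j => (f j, c j)) :
    ∃ i j, i ≠ j ∧ swap i j ∈ fiberPerm c ∧ swap i j ∈ fiberPerm f := by
  simp only [Function.Injective, not_forall, Prod.mk.injEq] at hf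
  obtain ⟨i, j, ⟨hfij, hcij⟩, hij⟩ := hf
  refine ⟨i, j, hij, ?_, ?_⟩ <;>
  · rw [mem_fiberPerm, comp_swap_eq_update]
    simp [hfij, hcij]

lemma card_eq_sum_columns [Fintype ι] [DecidableEq γ] (g : ι → ρ) (c : ι → γ)
    (s : Set ρ) [DecidablePred (· ∈ s)] :
    #{j | g j ∈ s} = ∑ y ∈ univ.image c, #{j | g j ∈ s ∧ c j = y} := by
  rw [card_eq_sum_card_fiberwise (f := c) (t := univ.image c) fun j _ => by simp]
  simp only [filter_filter]

namespace IsTableau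

lemma eq_one_of_mem_fiberPerm [LT ρ] {r : ι → ρ} {c : ι → γ} (hT : IsTableau r c) {q : Perm ι}
    (hr : q ∈ fiberPerm r) (hc : q ∈ fiberPerm c) : q = 1 :=
  Equiv.ext fun j => hT.injective (Prod.ext (congrFun hr j) (congrFun hc j))

variable [Fintype ι] [LinearOrder ρ] {r f : ι → ρ} {c : ι → γ}

lemma card_column_le [DecidableEq γ] (hT : IsTableau r c)
    (hf : Function.Injective fun j => (f j, c j)) {s : Set ρ} [DecidablePred (· ∈ s)]
    (hs : IsLowerSet s) (y : γ) :
    #{j | f j ∈ s ∧ c j = y} ≤ #{j | r j ∈ s ∧ c j = y} := by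
  by_cases hcol : ∀ j, c j = y → r j ∈ s
  · refine card_le_card fun j => ?_
    simp only [mem_filter_univ]
    exact fun hj => ⟨hcol j hj.2, hj.2⟩
  push Not at hcol
  obtain ⟨j, rfl, hj⟩ := hcol
  have f_injOn : Set.InjOn f ({i | f i ∈ s ∧ c i = c j} : Finset ι) := fun i hi i' hi' h => by
    simp only [coe_filter_univ, Set.mem_ofPred_eq] at hi hi'
    exact hf (Prod.ext h (hi.2.trans hi'.2.symm))
  rw [← Finset.card_image_of_injOn f_injOn]
  refine (card_le_card (image_subset_iff.2 fun i hi => ?_)).trans (card_image_le (f := r))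
  rw [mem_filter_univ] at hi
  obtain ⟨i', hr, hc⟩ := hT.exists_above j (f i) (lt_of_not_ge fun h => hj (hs h hi.1))
  exact mem_image.2 ⟨i', by simp [hr, hc, hi.1], hr⟩

lemma card_le (hT : IsTableau r c) (hf : Function.Injective fun j => (f j, c j))
    {s : Set ρ} [DecidablePred (· ∈ s)] (hs : IsLowerSet s) : #{j | f j ∈ s} ≤ #{j | r j ∈ s} := by
  rw [card_eq_sum_columns f c, card_eq_sum_columns r c]
  exact sum_le_sum fun y _ => hT.card_column_le hf hs y

lemma exists_column_perm (hT : IsTableau r c) (hf : Function.Injective fun j => (f j, c j))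
    (hcontent : content f = content r) : ∃ q ∈ fiberPerm c, r ∘ q = f := by
  have exists_box (j : ι) : ∃ i, r i = f j ∧ c i = c j := by
    by_contra! hbox
    have column_above (i : ι) (hi : c i = c j) : r i < f j :=
      lt_of_not_ge fun h => h.eq_or_lt.elim (fun h => hbox i h.symm hi) fun h => by
        obtain ⟨i', hr, hc⟩ := hT.exists_above i _ h
        exact hbox i' hr (hc.trans hi)
    have card_eq : #{i | f i ∈ Set.Iio (f j)} = #{i | r i ∈ Set.Iio (f j)} := by
      obtain ⟨e, rfl⟩ := exists_comp_perm_eq_of_content_eq hcontent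
      exact card_equiv e fun i => by simp
    rw [card_eq_sum_columns f c (Set.Iio (f j)), card_eq_sum_columns r c (Set.Iio (f j)),
      sum_eq_sum_iff_of_le fun y _ => hT.card_column_le hf (isLowerSet_Iio _) y] at card_eq
    have column_eq := card_eq (c j) (mem_image_of_mem c (mem_univ j))
    have hlt : #{i | f i ∈ Set.Iio (f j) ∧ c i = c j} < #{i | c i = c j} :=
      card_lt_card ⟨fun i => by simp, fun h => by simpa using @h j⟩
    rw [column_eq] at hlt
    refine hlt.ne (congrArg card (filter_congr fun i _ => ?_))
    exact and_iff_right_of_imp (column_above i)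
  choose q hr hc using exists_box
  have q_injective : Function.Injective q := fun i j hij =>
    hf (Prod.ext ((hr i).symm.trans (hij ▸ hr j)) ((hc i).symm.trans (hij ▸ hc j)))
  exact ⟨Equiv.ofBijective q q_injective.bijective_of_finite, funext hc, funext hr⟩

end IsTableau

end Tableaux

section GroupRing

open Module MonoidAlgebra

variable {G : Type*} [Group G]

/-- The sum of the elements of a subgroup, weighted by a sign character. It is the row symmetrizer
or the column antisymmetrizer of a tableau when the subgroup is its row or its column group. -/
def signedSum (θ : G →* ℤˣ) (H : Subgroup G) [Fintype H] : MonoidAlgebra ℤ G :=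
  ∑ h : H, single (h : G) (θ h : ℤ)

lemma coeff_signedSum (θ : G →* ℤˣ) (H : Subgroup G) [Fintype H] (g : G) :
    (signedSum θ H).coeff g = if g ∈ H then (θ g : ℤ) else 0 := by
  rw [signedSum, coeff_sum, Finsupp.finsetSum_apply]
  simp only [coeff_single, Finsupp.single_apply]
  split_ifs with hg
  · rw [sum_eq_single (⟨g, hg⟩ : H) (fun h _ hne => if_neg fun heq => hne (Subtype.ext heq))
      (by simp)]
    exact if_pos rfl
  · exact sum_eq_zero fun h _ => if_neg fun heq : (h : G) = g => hg (heq ▸ h.2)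

lemma signedSum_mul_single (θ : G →* ℤˣ) {H : Subgroup G} [Fintype H] {g : G} (hg : g ∈ H) :
    signedSum θ H * single g 1 = (θ g : ℤ) • signedSum θ H := by
  rw [signedSum, sum_mul, smul_sum]
  refine Fintype.sum_equiv (Equiv.mulRight (⟨g, hg⟩ : H)) _ _ fun h => ?_
  simp [single_mul_single, smul_single, mul_left_comm (θ g), ← Units.val_mul]

lemma single_mul_signedSum (θ : G →* ℤˣ) {H : Subgroup G} [Fintype H] {g : G} (hg : g ∈ H) :
    single g 1 * signedSum θ H = (θ g : ℤ) • signedSum θ H := by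
  rw [signedSum, mul_sum, smul_sum]
  refine Fintype.sum_equiv (Equiv.mulLeft (⟨g, hg⟩ : H)) _ _ fun h => ?_
  simp [single_mul_single, smul_single, ← mul_assoc, ← Units.val_mul]

/-- A factorization `a * b` for which `x ↦ a * x * b` takes values in the line through `a * b`. Up
to a scalar, `a * b` is then a primitive idempotent, as the Young symmetrizer is. -/
structure IsPrimitivePair (a b : MonoidAlgebra ℤ G) : Prop where
  coeff_one : (a * b).coeff 1 = 1
  exists_smul_eq : ∀ x, ∃ z : ℤ, a * x * b = z • (a * b)

namespace IsPrimitivePair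

variable {a b : MonoidAlgebra ℤ G}

lemma mul_mul_eq (h : IsPrimitivePair a b) (x : MonoidAlgebra ℤ G) :
    a * x * b = (a * x * b).coeff 1 • (a * b) := by
  obtain ⟨z, hz⟩ := h.exists_smul_eq x
  rw [hz, coeff_smul_apply, h.coeff_one, smul_eq_mul, mul_one]

lemma mul_self_eq (h : IsPrimitivePair a b) :
    a * b * (a * b) = (a * b * (a * b)).coeff 1 • (a * b) := by
  simpa [mul_assoc] using h.mul_mul_eq (b * a)

end IsPrimitivePair

section

variable [Fintype G] {K : Type*} [CommRing K]

/-- The trace of `x ↦ g * x * e` on the group ring. When `e * e = n • e`, it is `n` times the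
character at `g` of the left ideal generated by `e`. -/
def idealTrace (e : MonoidAlgebra K G) (g : G) : K := ∑ h, e.coeff (h⁻¹ * g⁻¹ * h)

lemma trace_mulLeft_comp_mulRight (x e : MonoidAlgebra K G) :
    LinearMap.trace K _ (LinearMap.mulLeft K x ∘ₗ LinearMap.mulRight K e) =
      ∑ g, x.coeff g * idealTrace e g := by
  simp only [idealTrace, mul_sum]
  rw [LinearMap.trace_eq_matrix_trace K (MonoidAlgebra.basis G K), Matrix.trace, sum_comm]
  refine sum_congr rfl fun h _ => ?_
  rw [Matrix.diag_apply, LinearMap.toMatrix_apply, MonoidAlgebra.basis_apply]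
  change (x * (single h (1 : K) * e)).coeff h = _
  rw [coeff_mul_apply_left, Finsupp.sum_fintype _ _ (by simp)]
  simp [coeff_single_mul_apply, mul_assoc]

lemma idealTrace_congr_of_isConj (e : MonoidAlgebra K G) {g g' : G} (h : IsConj g g') :
    idealTrace e g = idealTrace e g' := by
  obtain ⟨u, rfl⟩ := isConj_iff.1 h
  rw [idealTrace, idealTrace, ← Equiv.sum_comp (Equiv.mulLeft u⁻¹)]
  simp [mul_assoc]

lemma sum_idealTrace_mul (e : MonoidAlgebra K G) {F : G → K}
    (hF : ∀ g g', IsConj g g' → F g = F g') :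
    ∑ g, idealTrace e g * F g = Fintype.card G * ∑ g, e.coeff g * F g⁻¹ := by
  have conj_reindex (h : G) :
      ∑ g, e.coeff (h⁻¹ * g⁻¹ * h) * F g = ∑ g, e.coeff g * F g⁻¹ := by
    refine Fintype.sum_equiv ((Equiv.inv G).trans (MulAut.conj h⁻¹).toEquiv) _ _ fun g => ?_
    have hconj : IsConj g (h⁻¹ * g⁻¹ * h)⁻¹ := isConj_iff.2 ⟨h⁻¹, by group⟩
    simp [hF _ _ hconj, mul_assoc]
  simp only [idealTrace, sum_mul]
  rw [sum_comm]
  simp [conj_reindex]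

end

namespace IsPrimitivePair

variable {a b : MonoidAlgebra ℤ G}

lemma coeff_one_mul_self_ne_zero [Finite G] (h : IsPrimitivePair a b) :
    (a * b * (a * b)).coeff 1 ≠ 0 := by
  cases nonempty_fintype G
  intro hzero
  have sq_zero : a * b * (a * b) = 0 := by rw [h.mul_self_eq, hzero, zero_smul]
  have nilpotent : IsNilpotent (LinearMap.mulRight ℤ (a * b)) :=
    ⟨2, LinearMap.ext fun x => by
      rw [sq, Module.End.mul_apply, LinearMap.mulRight_apply, LinearMap.mulRight_apply, mul_assoc,
        sq_zero, mul_zero, LinearMap.zero_apply]⟩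
  have trace_eq := trace_mulLeft_comp_mulRight 1 (a * b)
  rw [LinearMap.mulLeft_one, LinearMap.id_comp,
    (LinearMap.isNilpotent_trace_of_isNilpotent nilpotent).eq_zero] at trace_eq
  simp only [one_def, coeff_single, Finsupp.single_apply, idealTrace, ite_mul, one_mul, zero_mul,
    sum_ite_eq, mem_univ, if_true, inv_one, mul_one, inv_mul_cancel, h.coeff_one, sum_const,
    Finset.card_univ, nsmul_one] at trace_eq
  exact Fintype.card_ne_zero (mod_cast trace_eq.symm)

lemma sum_coeff_mul_idealTrace [Fintype G] (h : IsPrimitivePair a b) :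
    ∑ g, (a * b).coeff g * idealTrace (a * b) g = (a * b * (a * b)).coeff 1 ^ 2 := by
  set T := LinearMap.mulLeft ℤ (a * b) ∘ₗ LinearMap.mulRight ℤ (a * b) with hT
  have rank_one :
      T = (Finsupp.lapply 1 ∘ₗ (coeffLinearEquiv ℤ).toLinearMap ∘ₗ T).smulRight (a * b) :=
    LinearMap.ext fun x => by simpa [hT, mul_assoc] using h.mul_mul_eq (b * x * a)
  have cube_eq : a * b * (a * b * (a * b)) = (a * b * (a * b)).coeff 1 ^ 2 • (a * b) := by
    rw [sq, mul_smul, ← h.mul_self_eq, ← mul_smul_comm, ← h.mul_self_eq]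
  rw [← trace_mulLeft_comp_mulRight, ← hT, rank_one, LinearMap.trace_smulRight]
  change (a * b * (a * b * (a * b))).coeff 1 = _
  rw [cube_eq, coeff_smul_apply, h.coeff_one, smul_eq_mul, mul_one]

end IsPrimitivePair

end GroupRing

section YoungSymmetrizer

open Equiv Equiv.Perm MonoidAlgebra

variable {ι ρ γ : Type*} [Fintype ι] [DecidableEq ι]

/-- The Young symmetrizer of a tableau: the signed sum over its column group times the sum over its
row group. -/
def youngSymmetrizer (r : ι → ρ) (c : ι → γ) : MonoidAlgebra ℤ (Perm ι) :=
  signedSum sign (fiberPerm c) * signedSum 1 (fiberPerm r)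

/-- The coefficient of the word `w` in the signed sum of the words obtained from `f` by the
permutations preserving the columns `c`. -/
def antisymCoeff (c : ι → γ) (f w : ι → ρ) : ℤ :=
  ∑ q : fiberPerm c, if f ∘ q = w then (sign (q : Perm ι) : ℤ) else 0

lemma antisymCoeff_comp (c : ι → γ) (f w : ι → ρ) (q : fiberPerm c) :
    antisymCoeff c (f ∘ q) w = sign (q : Perm ι) * antisymCoeff c f w := by
  rw [antisymCoeff, antisymCoeff, mul_sum]
  refine Fintype.sum_equiv (Equiv.mulLeft q) _ _ fun q' => ?_
  simp [Function.comp_assoc, ← mul_assoc, ← Units.val_mul]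

lemma antisymCoeff_eq_zero {c : ι → γ} {f : ι → ρ}
    (hf : ¬ Function.Injective fun j => (f j, c j)) (w : ι → ρ) : antisymCoeff c f w = 0 := by
  obtain ⟨i, j, hij, hc, hf⟩ := exists_swap_mem_fiberPerm hf
  have h := antisymCoeff_comp c f w ⟨swap i j, hc⟩
  rw [mem_fiberPerm.1 hf, sign_swap hij] at h
  simp only [Units.val_neg, Units.val_one, neg_one_mul] at h
  omega

lemma coeff_youngSymmetrizer_inv (r : ι → ρ) (c : ι → γ) (g : Perm ι) :
    (youngSymmetrizer r c).coeff g⁻¹ = antisymCoeff c r (r ∘ g) := by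
  rw [youngSymmetrizer, signedSum, sum_mul, coeff_sum, Finsupp.finsetSum_apply, antisymCoeff]
  refine Fintype.sum_equiv (Equiv.inv _) _ _ fun q => ?_
  have mem_iff : (q : Perm ι)⁻¹ * g⁻¹ ∈ fiberPerm r ↔ r ∘ ((q : Perm ι)⁻¹ : Perm ι) = r ∘ g := by
    rw [mem_fiberPerm, Perm.coe_mul, ← Function.comp_assoc]
    exact (Equiv.comp_symm_eq g _ _)
  rw [coeff_single_mul_apply, coeff_signedSum, if_congr mem_iff rfl rfl]
  simp

lemma sum_coeff_youngSymmetrizer_mul (r : ι → ρ) (c : ι → γ) (F : Perm ι → ℤ) :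
    ∑ g, (youngSymmetrizer r c).coeff g * F g =
      ∑ q : fiberPerm c, ∑ p : fiberPerm r, sign (q : Perm ι) * F (q * p) := by
  simp only [youngSymmetrizer, signedSum, sum_mul_sum, single_mul_single, coeff_sum,
    Finsupp.finsetSum_apply, coeff_single]
  simp only [sum_mul]
  rw [sum_comm]
  refine sum_congr rfl fun q _ => ?_
  rw [sum_comm]
  refine sum_congr rfl fun p _ => ?_
  simp [Finsupp.single_apply]

lemma sum_coeff_youngSymmetrizer_mul_coeff_cyclePowerSum [Fintype ρ] (r : ι → ρ) (c : ι → γ)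
    (ν : ρ →₀ ℕ) :
    ∑ g, (youngSymmetrizer r c).coeff g * (cyclePowerSum ρ g).coeff ν =
      ∑ f : ι → ρ with content f = ν, ∑ p : fiberPerm r, antisymCoeff c f (f ∘ p) := by
  have fixed_iff (f : ι → ρ) (q p : Perm ι) : f ∘ (q * p⁻¹ : Perm ι) = f ↔ f ∘ q = f ∘ p := by
    rw [Perm.coe_mul, ← Function.comp_assoc]
    exact Equiv.comp_symm_eq p _ _
  have term_eq (q : fiberPerm c) (p : fiberPerm r) :
      (sign (q : Perm ι) : ℤ) * (cyclePowerSum ρ (q * (p⁻¹ : fiberPerm r) : Perm ι)).coeff ν =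
        ∑ f : ι → ρ with content f = ν, if f ∘ (q : Perm ι) = f ∘ (p : Perm ι) then
          (sign (q : Perm ι) : ℤ) else 0 := by
    rw [coeff_cyclePowerSum, ← sum_filter, filter_filter, sum_const, nsmul_eq_mul, mul_comm]
    simp only [Subgroup.coe_inv, fixed_iff, and_comm]
  simp only [antisymCoeff, sum_coeff_youngSymmetrizer_mul]
  rw [sum_comm, sum_comm (s := {f | content f = ν}), ← Equiv.sum_comp (Equiv.inv _)]
  refine sum_congr rfl fun p _ => ?_
  rw [sum_comm]
  exact sum_congr rfl fun q _ => term_eq q p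

lemma sum_coeff_youngSymmetrizer_mul_eq_zero [Fintype ρ] (r : ι → ρ) {c : ι → γ} {ν : ρ →₀ ℕ}
    (hν : ∀ f : ι → ρ, content f = ν → ¬ Function.Injective fun j => (f j, c j)) :
    ∑ g, (youngSymmetrizer r c).coeff g * (cyclePowerSum ρ g).coeff ν = 0 := by
  rw [sum_coeff_youngSymmetrizer_mul_coeff_cyclePowerSum]
  exact sum_eq_zero fun f hf => sum_eq_zero fun p _ =>
    antisymCoeff_eq_zero (hν f (mem_filter.1 hf).2) _

namespace IsTableau

variable [LinearOrder ρ] {r : ι → ρ} {c : ι → γ}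

lemma exists_mul_single_mul_eq (hT : IsTableau r c) (u : Perm ι) :
    ∃ z : ℤ, signedSum sign (fiberPerm c) * single u 1 * signedSum 1 (fiberPerm r) =
      z • youngSymmetrizer r c := by
  by_cases hf : Function.Injective fun j => ((r ∘ (u⁻¹ : Perm ι)) j, c j)
  · obtain ⟨q, hq, hrq⟩ := hT.exists_column_perm hf (content_comp_perm r u⁻¹)
    have mem_row : q * u ∈ fiberPerm r := by
      rw [mem_fiberPerm, Perm.coe_mul, ← Function.comp_assoc, hrq, Function.comp_assoc,
        ← Perm.coe_mul, inv_mul_cancel, Perm.coe_one, Function.comp_id]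
    have factor : single u (1 : ℤ) = single q⁻¹ 1 * single (q * u) 1 := by
      simp [single_mul_single]
    refine ⟨sign q⁻¹, ?_⟩
    rw [factor, ← mul_assoc, signedSum_mul_single _ (inv_mem hq), mul_assoc,
      single_mul_signedSum _ mem_row, MonoidHom.one_apply, Units.val_one, one_smul,
      smul_mul_assoc, youngSymmetrizer]
  · obtain ⟨i, j, hij, hc, hr⟩ := exists_swap_mem_fiberPerm hf
    have mem_row : u⁻¹ * swap i j * u ∈ fiberPerm r := by
      rw [mem_fiberPerm, Perm.coe_mul, Perm.coe_mul, ← Function.comp_assoc, ← Function.comp_assoc,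
        mem_fiberPerm.1 hr, Function.comp_assoc, ← Perm.coe_mul, inv_mul_cancel, Perm.coe_one,
        Function.comp_id]
    have factor : single u (1 : ℤ) =
        single (swap i j) 1 * (single u 1 * single (u⁻¹ * swap i j * u) 1) := by
      simp [single_mul_single, ← mul_assoc]
    refine ⟨0, ?_⟩
    have eq_neg : signedSum sign (fiberPerm c) * single u 1 * signedSum 1 (fiberPerm r) =
        -(signedSum sign (fiberPerm c) * single u 1 * signedSum 1 (fiberPerm r)) := by
      conv_lhs => rw [factor]
      rw [← mul_assoc, signedSum_mul_single _ hc, ← mul_assoc, mul_assoc _ (single _ _),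
        single_mul_signedSum _ mem_row, sign_swap hij]
      simp
    rw [zero_smul]
    ext g
    have := congrArg (fun x => x.coeff g) eq_neg
    simp only [coeff_neg, Finsupp.neg_apply] at this
    simpa using by omega

lemma isPrimitivePair (hT : IsTableau r c) :
    IsPrimitivePair (signedSum sign (fiberPerm c)) (signedSum 1 (fiberPerm r)) where
  coeff_one := by
    have h := coeff_youngSymmetrizer_inv r c 1
    rw [inv_one, youngSymmetrizer] at h
    rw [h, antisymCoeff, sum_eq_single 1]
    · simp
    · exact fun q _ hq => if_neg fun hr => hq (Subtype.ext (hT.eq_one_of_mem_fiberPerm hr q.2))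
    · simp
  exists_smul_eq x := by
    induction x using MonoidAlgebra.induction_linear with
    | zero => exact ⟨0, by simp⟩
    | add x y hx hy =>
      obtain ⟨z, hz⟩ := hx
      obtain ⟨w, hw⟩ := hy
      exact ⟨z + w, by rw [mul_add, add_mul, hz, hw, add_smul]⟩
    | single u m =>
      obtain ⟨z, hz⟩ := hT.exists_mul_single_mul_eq u
      refine ⟨m * z, ?_⟩
      rw [← mul_one m, ← smul_eq_mul m 1, ← smul_single, mul_smul_comm, smul_mul_assoc, hz,
        smul_smul, smul_eq_mul, mul_one, youngSymmetrizer]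

lemma sum_content_eq_sum_fiberPerm [Fintype ρ] (hT : IsTableau r c) {F : (ι → ρ) → ℤ}
    (hF : ∀ f, ¬ (Function.Injective fun j => (f j, c j)) → F f = 0) :
    ∑ f : ι → ρ with content f = content r, F f = ∑ q : fiberPerm c, F (r ∘ (q : Perm ι)) := by
  have orbit_injective : Function.Injective fun q : fiberPerm c => r ∘ (q : Perm ι) :=
    fun q q' h => by
      have diff_mem : (q' * q⁻¹ : Perm ι) ∈ fiberPerm r := by
        rw [mem_fiberPerm, Perm.coe_mul, ← Function.comp_assoc]
        exact (Equiv.comp_symm_eq (q : Perm ι) _ _).2 h.symm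
      exact Subtype.ext (mul_inv_eq_one.1
        (hT.eq_one_of_mem_fiberPerm diff_mem (mul_mem q'.2 (inv_mem q.2)))).symm
  rw [← sum_image (f := F) orbit_injective.injOn]
  refine (sum_subset (fun f hf => ?_) fun f hf hnot => hF f fun hinj => hnot ?_).symm
  · obtain ⟨q, -, rfl⟩ := mem_image.1 hf
    exact mem_filter.2 ⟨mem_univ _, content_comp_perm r q⟩
  · obtain ⟨q, hq, rfl⟩ := hT.exists_column_perm hinj (mem_filter.1 hf).2
    exact mem_image_of_mem _ (mem_univ (⟨q, hq⟩ : fiberPerm c))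

lemma sum_coeff_youngSymmetrizer_mul_coeff_content [Fintype ρ] (hT : IsTableau r c) :
    ∑ g, (youngSymmetrizer r c).coeff g * (cyclePowerSum ρ g).coeff (content r) =
      (youngSymmetrizer r c * youngSymmetrizer r c).coeff 1 := by
  have words_eq := hT.sum_content_eq_sum_fiberPerm
    (F := fun f => ∑ p : fiberPerm r, antisymCoeff c f (f ∘ (p : Perm ι)))
    fun f hf => sum_eq_zero fun p _ => antisymCoeff_eq_zero hf _
  rw [sum_coeff_youngSymmetrizer_mul_coeff_cyclePowerSum, coeff_mul_apply_left,
    Finsupp.sum_fintype _ _ (by simp)]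
  convert words_eq
  simp only [mul_one, sum_coeff_youngSymmetrizer_mul, antisymCoeff_comp, coeff_youngSymmetrizer_inv,
    Function.comp_assoc, ← Perm.coe_mul]

end IsTableau

end YoungSymmetrizer

section FrobeniusPairing

open MvPolynomial Equiv Equiv.Perm MonoidAlgebra

variable {ι ρ γ : Type*} [Fintype ι]

lemma eq_one_of_sum_Iic_le [LinearOrder ρ] [LocallyFiniteOrderBot ρ] [WellFoundedLT ρ]
    {δ : ρ → ℕ} (hδ : StrictAnti δ) {σ : Perm ρ}
    (h : ∀ i, ∑ j ∈ Iic i, δ j ≤ ∑ j ∈ Iic i, δ (σ j)) : σ = 1 := by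
  ext i
  induction i using WellFoundedLT.induction with
  | ind i ih =>
    have sum_Iio_eq : ∑ j ∈ Iio i, δ (σ j) = ∑ j ∈ Iio i, δ j :=
      sum_congr rfl fun j hj => by rw [ih j (mem_Iio.1 hj), Perm.one_apply]
    have δ_le : δ i ≤ δ (σ i) := by
      have hi := h i
      rw [← Iio_insert, sum_insert notMem_Iio_self, sum_insert notMem_Iio_self, sum_Iio_eq] at hi
      omega
    refine (hδ.le_iff_ge.1 δ_le).eq_of_not_lt fun hlt => hlt.ne (σ.injective ?_)
    rw [ih _ hlt, Perm.one_apply]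

lemma sum_content_eq_card (f : ι → ρ) (s : Finset ρ) :
    ∑ m ∈ s, content f m = #{j | f j ∈ (s : Set ρ)} := by
  rw [card_eq_sum_card_fiberwise (f := f) (t := s) fun j hj => (mem_filter.1 hj).2]
  refine sum_congr rfl fun m hm => ?_
  rw [content_apply, filter_filter]
  refine congrArg card (filter_congr fun j _ => ?_)
  exact ⟨fun h => ⟨h ▸ hm, h⟩, And.right⟩

namespace IsTableau

lemma antitone_content [LinearOrder ρ] {r : ι → ρ} {c : ι → γ} (hT : IsTableau r c) :
    Antitone (content r) := fun m m' hm => by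
  obtain rfl | hlt := hm.eq_or_lt
  · exact le_rfl
  rw [content_apply, content_apply]
  have exists_box (j : ι) (hj : r j = m') : ∃ i, r i = m ∧ c i = c j :=
    hT.exists_above j m (hj ▸ hlt)
  choose! q hr hc using exists_box
  refine card_le_card_of_injOn q (fun j hj => by simpa using hr j (by simpa using hj))
    fun i hi j hj hij => hT.injective (Prod.ext ?_ ?_) <;>
  simp only [coe_filter_univ, Set.mem_ofPred_eq] at hi hj
  · exact hi.trans hj.symm
  · exact (hc i hi).symm.trans (hij ▸ hc j hj)

lemma sum_Iic_content_le [LinearOrder ρ] [LocallyFiniteOrderBot ρ] {r f : ι → ρ} {c : ι → γ}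
    (hT : IsTableau r c) (hf : Function.Injective fun j => (f j, c j)) (i : ρ) :
    ∑ m ∈ Iic i, content f m ≤ ∑ m ∈ Iic i, content r m := by
  rw [sum_content_eq_card, sum_content_eq_card]
  have lower : IsLowerSet (↑(Iic i) : Set ρ) := coe_Iic i ▸ isLowerSet_Iic i
  convert hT.card_le hf lower

variable [DecidableEq ι] {d : ℕ} {r : ι → Fin d} {c : ι → γ}

-- A word with column-distinct letters and content `λ + δ - σδ` is dominated by the rows of the
-- tableau, which forces `σ = 1`.
lemma sum_coeff_youngSymmetrizer_mul_coeff_sub_eq_zero (hT : IsTableau r c) {σ : Perm (Fin d)}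
    (hσ : σ ≠ 1) (hle : (staircase d).equivMapDomain σ ≤ content r + staircase d) :
    ∑ g, (youngSymmetrizer r c).coeff g * (cyclePowerSum (Fin d) g).coeff
      (content r + staircase d - (staircase d).equivMapDomain σ) = 0 := by
  refine sum_coeff_youngSymmetrizer_mul_eq_zero r fun f hf hinj => hσ ?_
  have add_eq := hf ▸ tsub_add_cancel_of_le hle
  refine inv_eq_one.1 (eq_one_of_sum_Iic_le (δ := staircase d) staircase_strictAnti fun i => ?_)
  have dominated := hT.sum_Iic_content_le hinj i
  have sum_eq : ∑ m ∈ Iic i, (content f + (staircase d).equivMapDomain σ) m =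
      ∑ m ∈ Iic i, (content r + staircase d) m := by rw [add_eq]
  simp only [Finsupp.add_apply, sum_add_distrib, Finsupp.equivMapDomain_apply] at sum_eq
  exact Nat.le_of_add_le_add_left (sum_eq.symm.trans_le (Nat.add_le_add_right dominated _))

lemma sum_coeff_youngSymmetrizer_mul_frobeniusCoeff (hT : IsTableau r c) :
    ∑ g, (youngSymmetrizer r c).coeff g * frobeniusCoeff (content r + staircase d) g =
      (youngSymmetrizer r c * youngSymmetrizer r c).coeff 1 := by
  have equivMapDomain_one : (staircase d).equivMapDomain (1 : Perm (Fin d)) = staircase d :=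
    Finsupp.equivMapDomain_refl _
  simp only [frobeniusCoeff_eq_sum, mul_sum]
  rw [sum_comm, sum_eq_single 1 (fun σ _ hσ => ?_) (by simp)]
  · simpa [equivMapDomain_one] using hT.sum_coeff_youngSymmetrizer_mul_coeff_content
  · by_cases hle : (staircase d).equivMapDomain σ ≤ content r + staircase d
    · simp only [if_pos hle, mul_left_comm _ ((sign σ : ℤˣ) : ℤ), ← mul_sum]
      rw [hT.sum_coeff_youngSymmetrizer_mul_coeff_sub_eq_zero hσ hle, mul_zero]
    · simp [if_neg hle]

theorem idealTrace_youngSymmetrizer (hT : IsTableau r c) (π : Perm ι) :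
    idealTrace (youngSymmetrizer r c) π =
      (youngSymmetrizer r c * youngSymmetrizer r c).coeff 1 *
        frobeniusCoeff (content r + staircase d) π := by
  set e := youngSymmetrizer r c
  set n := (e * e).coeff 1
  set ψ : Perm ι → ℤ := frobeniusCoeff (content r + staircase d)
  have sum_trace_mul_ψ : ∑ g, idealTrace e g * ψ g = Fintype.card (Perm ι) * n := by
    rw [sum_idealTrace_mul e fun _ _ => frobeniusCoeff_congr_of_isConj _]
    simp only [← frobeniusCoeff_congr_of_isConj _ (isConj_perm_inv _)]
    exact congrArg _ hT.sum_coeff_youngSymmetrizer_mul_frobeniusCoeff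
  have sum_trace_sq : ∑ g, idealTrace e g * idealTrace e g = Fintype.card (Perm ι) * n ^ 2 := by
    rw [sum_idealTrace_mul e fun _ _ => idealTrace_congr_of_isConj e]
    simp only [← idealTrace_congr_of_isConj e (isConj_perm_inv _)]
    exact congrArg _ hT.isPrimitivePair.sum_coeff_mul_idealTrace
  have sum_ψ_sq : ∑ g, ψ g ^ 2 = Fintype.card (Perm ι) := by
    rw [Fintype.card_perm]
    exact sum_frobeniusCoeff_sq (strictAnti_add_staircase hT.antitone_content)
      (by rw [map_add, degree_content])
  have sum_sub_sq : ∑ g, (idealTrace e g - n * ψ g) ^ 2 = 0 := by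
    calc ∑ g, (idealTrace e g - n * ψ g) ^ 2
        = ∑ g, idealTrace e g * idealTrace e g - 2 * n * ∑ g, idealTrace e g * ψ g +
            n ^ 2 * ∑ g, ψ g ^ 2 := by
          simp only [mul_sum, ← sum_sub_distrib, ← sum_add_distrib]
          exact sum_congr rfl fun g _ => by ring
      _ = 0 := by rw [sum_trace_sq, sum_trace_mul_ψ, sum_ψ_sq]; ring
  have sq_eq_zero := (sum_eq_zero_iff_of_nonneg fun g _ => sq_nonneg _).1 sum_sub_sq π (mem_univ π)
  exact sub_eq_zero.1 (pow_eq_zero_iff two_ne_zero |>.1 sq_eq_zero)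

end IsTableau

end FrobeniusPairing

section Characters

open Equiv Equiv.Perm MonoidAlgebra

lemma mul_trace_restrict_range {K V : Type*} [Field K] [AddCommGroup V] [Module K V]
    [FiniteDimensional K V] {P T : V →ₗ[K] V} {n : K} (hP : ∀ v, P (P v) = n • P v)
    (hPT : ∀ v, P (T v) = T (P v))
    (hT : ∀ v ∈ LinearMap.range P, T v ∈ LinearMap.range P) :
    n * LinearMap.trace K _ (T.restrict hT) = LinearMap.trace K V (T ∘ₗ P) := by
  have restrict_eq :
      n • T.restrict hT = P.rangeRestrict ∘ₗ T ∘ₗ (LinearMap.range P).subtype := by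
    ext ⟨_, v, rfl⟩
    simp [hPT, hP, LinearMap.restrict_apply]
  rw [← smul_eq_mul, ← map_smul, restrict_eq, ← LinearMap.trace_comp_comm']
  rfl

lemma mapRingHom_signedSum {G : Type*} [Group G] [Fintype G] (K : Type*) [CommRing K] (θ : G →* ℤˣ)
    (H : Subgroup G) : mapRingHom G (Int.castRingHom K) (signedSum θ H) =
      ∑ g with g ∈ H, single g ((θ g : ℤ) : K) := by
  rw [signedSum, map_sum]
  simpa using (sum_subtype (F := inferInstance) _ (fun g => mem_filter_univ g)
    fun g => single g ((θ g : ℤ) : K)).symm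

variable {k : ℕ} {ρ : Type*} {r : Fin k → ρ} {t : Fin k → ℕ × ℕ}

lemma youngSym_eq_mapRingHom (hr : ∀ i j, r i = r j ↔ (t i).1 = (t j).1) :
    youngSym k t = mapRingHom _ (Int.castRingHom ℂ) (youngSymmetrizer r fun j => (t j).2) := by
  rw [youngSymmetrizer, map_mul, mapRingHom_signedSum, mapRingHom_signedSum, youngSym]
  simp [mem_fiberPerm, _root_.funext_iff, hr]

theorem youngIdealChar_eq_frobeniusCoeff {d : ℕ} {r : Fin k → Fin d}
    (hr : ∀ i j, r i = r j ↔ (t i).1 = (t j).1) (hT : IsTableau r fun j => (t j).2)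
    (π : Perm (Fin k)) :
    youngIdealChar k t π = frobeniusCoeff (content r + staircase d) π := by
  set e := youngSymmetrizer r fun j => (t j).2 with he
  set n := (e * e).coeff 1
  have n_ne_zero : (n : ℂ) ≠ 0 := Int.cast_ne_zero.2 hT.isPrimitivePair.coeff_one_mul_self_ne_zero
  have sym_mul_self : youngSym k t * youngSym k t = (n : ℂ) • youngSym k t := by
    rw [youngSym_eq_mapRingHom hr, ← map_mul, ← he,
      show e * e = n • e from hT.isPrimitivePair.mul_self_eq, map_zsmul, Int.cast_smul_eq_zsmul]
  have idealTrace_eq : idealTrace (youngSym k t) π = idealTrace e π := by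
    simp [idealTrace, youngSym_eq_mapRingHom hr, he]
  refine mul_left_cancel₀ n_ne_zero ?_
  calc (n : ℂ) * youngIdealChar k t π
      = LinearMap.trace ℂ _
          (LinearMap.mulLeft ℂ (single π 1) ∘ₗ LinearMap.mulRight ℂ (youngSym k t)) :=
        mul_trace_restrict_range
          (fun x => by simp only [LinearMap.mulRight_apply, mul_assoc, sym_mul_self, mul_smul_comm])
          (fun x => by simp only [LinearMap.mulRight_apply, LinearMap.mulLeft_apply, mul_assoc]) _
    _ = idealTrace (youngSym k t) π := by
        rw [trace_mulLeft_comp_mulRight]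
        simp [coeff_single, Finsupp.single_apply]
    _ = n * frobeniusCoeff (content r + staircase d) π := by
        rw [idealTrace_eq, hT.idealTrace_youngSymmetrizer, Int.cast_mul]

end Characters

section YoungDiagrams

variable {d k : ℕ}

/-- The partition with parts `l 0, l 1, …` as an infinite sequence, padded by zeros. -/
def partitionSeq (l : Fin d →₀ ℕ) (i : ℕ) : ℕ := if h : i < d then l ⟨i, h⟩ else 0

lemma partitionSeq_val (l : Fin d →₀ ℕ) (i : Fin d) : partitionSeq l i = l i := dif_pos i.2

lemma partitionSeq_eq_zero (l : Fin d →₀ ℕ) {i : ℕ} (hi : d ≤ i) : partitionSeq l i = 0 :=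
  dif_neg hi.not_gt

lemma antitone_partitionSeq {l : Fin d →₀ ℕ} (hl : Antitone l) : Antitone (partitionSeq l) := by
  intro i j hij
  by_cases hj : j < d
  · rw [partitionSeq, partitionSeq, dif_pos hj, dif_pos (hij.trans_lt hj)]
    exact hl hij
  · rw [partitionSeq_eq_zero l (not_lt.1 hj)]
    exact Nat.zero_le _

lemma sum_range_partitionSeq (l : Fin d →₀ ℕ) : ∑ i ∈ range d, partitionSeq l i = l.degree := by
  rw [sum_range, Finsupp.degree_eq_sum]
  exact sum_congr rfl fun i _ => partitionSeq_val l i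

lemma isPartitionOf_partitionSeq {l : Fin d →₀ ℕ} (hl : l ∈ partitionVectors d k) :
    IsPartitionOf k (partitionSeq l) := by
  obtain ⟨rfl, hanti⟩ := mem_partitionVectors.1 hl
  have anti := antitone_partitionSeq hanti
  have eq_zero {i : ℕ} (hi : l.degree ≤ i) : partitionSeq l i = 0 := by
    by_contra hne
    have hid : i < d := not_le.1 fun h => hne (partitionSeq_eq_zero l h)
    have lower : #(range (i + 1)) • 1 ≤ ∑ j ∈ range (i + 1), partitionSeq l j :=
      card_nsmul_le_sum _ _ _ fun j hj =>
        (Nat.one_le_iff_ne_zero.2 hne).trans (anti (mem_range_succ_iff.1 hj))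
    have upper : ∑ j ∈ range (i + 1), partitionSeq l j ≤ ∑ j ∈ range d, partitionSeq l j :=
      sum_le_sum_of_subset (range_subset_range.2 hid)
    rw [sum_range_partitionSeq] at upper
    rw [card_range, smul_eq_mul, mul_one] at lower
    omega
  refine ⟨anti, fun i hi => eq_zero hi, ?_⟩
  conv_rhs => rw [← sum_range_partitionSeq l]
  rw [← eventually_constant_sum (fun i hi => eq_zero hi) (le_max_left l.degree d),
    ← eventually_constant_sum (fun i hi => partitionSeq_eq_zero l hi) (le_max_right l.degree d)]

lemma mem_youngCells {lam : ℕ → ℕ} (hlam : IsPartitionOf k lam) {a b : ℕ} :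
    (a, b) ∈ youngCells k lam ↔ b < lam a := by
  simp only [youngCells, mem_filter, mem_product, mem_range, and_iff_right_iff_imp]
  intro hb
  have ha : a < k := not_le.1 fun h => (Nat.zero_le b).not_gt (hlam.2.1 a h ▸ hb)
  have part_le : lam a ≤ ∑ i ∈ range k, lam i :=
    single_le_sum (fun _ _ => Nat.zero_le _) (mem_range.2 ha)
  exact ⟨ha, hb.trans_le (part_le.trans_eq hlam.2.2)⟩

section

variable {ι ρ : Type*} {l : ρ →₀ ℕ}

lemma isTableau_of_equiv_sigma [Preorder ρ] (hl : Antitone l) (e : ι ≃ Σ i, Fin (l i)) :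
    IsTableau (fun j => (e j).1) fun j => ((e j).2 : ℕ) where
  injective i j h := by
    obtain ⟨hrow, hcol⟩ := Prod.mk.inj h
    exact e.injective (Sigma.ext hrow ((Fin.heq_ext_iff (congrArg l hrow)).2 hcol))
  exists_above j m hm := by
    refine ⟨e.symm ⟨m, (e j).2, (e j).2.2.trans_le (hl hm.le)⟩, ?_, ?_⟩ <;>
    rw [e.apply_symm_apply]

lemma content_of_equiv_sigma [Fintype ι] (e : ι ≃ Σ i, Fin (l i)) :
    content (fun j => (e j).1) = l := by
  ext m
  rw [content_apply, ← Fintype.card_subtype, Fintype.card_congr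
    ((e.subtypeEquiv fun _ => Iff.rfl).trans (Equiv.sigmaSubtype m)), Fintype.card_fin]

end

lemma bijOn_youngCells_of_equiv_sigma {l : Fin d →₀ ℕ} (hl : l ∈ partitionVectors d k)
    (e : Fin k ≃ Σ i, Fin (l i)) :
    Set.BijOn (fun j => (((e j).1 : ℕ), ((e j).2 : ℕ))) Set.univ
      (youngCells k (partitionSeq l)) := by
  have tableau := isTableau_of_equiv_sigma (mem_partitionVectors.1 hl).2 e
  have mem_cells {a b : ℕ} := mem_youngCells (isPartitionOf_partitionSeq hl) (a := a) (b := b)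
  refine ⟨fun j _ => ?_, fun i _ j _ h => tableau.injective ?_, fun ⟨a, b⟩ hab => ?_⟩
  · rw [mem_coe, mem_cells, partitionSeq_val]
    exact (e j).2.2
  · obtain ⟨hrow, hcol⟩ := Prod.mk.inj h
    exact Prod.ext (Fin.ext hrow) hcol
  · rw [mem_coe, mem_cells] at hab
    have ha : a < d := not_le.1 fun h => (Nat.zero_le b).not_gt (partitionSeq_eq_zero l h ▸ hab)
    rw [partitionSeq, dif_pos ha] at hab
    exact ⟨e.symm ⟨⟨a, ha⟩, b, hab⟩, Set.mem_univ _, by dsimp only; rw [e.apply_symm_apply]⟩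

theorem characterFamily_eq_frobeniusCoeff {chi : (k : ℕ) → (ℕ → ℕ) → Equiv.Perm (Fin k) → ℂ}
    (hchi : IsCharacterFamily chi) {l : Fin d →₀ ℕ} (hl : l ∈ partitionVectors d k)
    (π : Equiv.Perm (Fin k)) :
    chi k (partitionSeq l) π = frobeniusCoeff (l + staircase d) π := by
  obtain ⟨hdegree, hanti⟩ := mem_partitionVectors.1 hl
  let e : Fin k ≃ Σ i, Fin (l i) :=
    Fintype.equivOfCardEq (by simp [← hdegree, Finsupp.degree_eq_sum])
  rw [hchi k _ (isPartitionOf_partitionSeq hl) _ (bijOn_youngCells_of_equiv_sigma hl e),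
    youngIdealChar_eq_frobeniusCoeff (r := fun j => (e j).1) (fun i j => Fin.ext_iff)
      (isTableau_of_equiv_sigma hanti e), content_of_equiv_sigma]

end YoungDiagrams

section CharacterFormula

open MvPolynomial

variable {d k : ℕ} {R : Type*} [CommRing R]

lemma aeval_alternant (x : Fin d → R) (α : Fin d → ℕ) :
    aeval x (alternant (X : Fin d → MvPolynomial (Fin d) ℤ) α) = alternant x α := by
  simp [alternant, Matrix.det_apply', map_sum, map_mul, map_prod]

lemma aeval_cyclePowerSum {ι : Type*} [Fintype ι] [DecidableEq ι] (x : Fin d → R)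
    (π : Equiv.Perm ι) :
    aeval x (cyclePowerSum (Fin d) π) =
      (π.partition.parts.map fun m => ∑ i, x i ^ m).prod := by
  simp [psumPart, psum, map_multiset_prod, Function.comp_def]

lemma parts_partition_eq {π : Equiv.Perm (Fin k)} {τ : Multiset ℕ} (hτsum : τ.sum = k)
    (hπ : π.cycleType = τ.filter (· ≠ 1)) : π.partition.parts = τ := by
  have split : τ.filter (· ≠ 1) + Multiset.replicate (τ.count 1) 1 = τ := by
    rw [← Multiset.filter_eq', add_comm, Multiset.filter_add_not]
  have card_add_count := congrArg Multiset.sum split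
  rw [Multiset.sum_add, ← hπ, π.sum_cycleType, hτsum, Multiset.sum_replicate, smul_eq_mul,
    mul_one] at card_add_count
  have fixed_eq_count : k - #π.support = τ.count 1 := by omega
  rw [Equiv.Perm.parts_partition, Fintype.card_fin, fixed_eq_count, hπ, split]

lemma sum_partitionVectors {M : Type*} [AddCommMonoid M] (F : (Fin d →₀ ℕ) → M) :
    ∑ l ∈ partitionVectors d k, F l =
      ∑ lam : Fin d → Fin (k + 1) with Antitone (fun i => (lam i : ℕ)) ∧ ∑ i, (lam i : ℕ) = k,
        F (Finsupp.equivFunOnFinite.symm fun i => lam i) := by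
  symm
  refine sum_bij (fun lam _ => Finsupp.equivFunOnFinite.symm fun i => (lam i : ℕ)) (fun lam h => ?_)
    (fun lam _ mu _ h => ?_) (fun l hl => ?_) fun _ _ => rfl
  · rw [mem_filter_univ] at h
    exact mem_partitionVectors.2 ⟨by simpa [Finsupp.degree_eq_sum] using h.2, h.1⟩
  · exact funext fun i => Fin.ext (congrFun (Finsupp.equivFunOnFinite.symm.injective h) i)
  · obtain ⟨hdegree, hanti⟩ := mem_partitionVectors.1 hl
    have part_lt (i : Fin d) : l i < k + 1 := Nat.lt_succ_of_le (hdegree ▸ Finsupp.le_degree i l)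
    refine ⟨fun i => ⟨l i, part_lt i⟩, mem_filter.2 ⟨mem_univ _, hanti, ?_⟩,
      Finsupp.ext fun i => rfl⟩
    exact (Finsupp.degree_eq_sum l).symm.trans hdegree

theorem prod_psum_mul_alternant [Algebra ℂ R]
    {chi : (k : ℕ) → (ℕ → ℕ) → Equiv.Perm (Fin k) → ℂ} (hchi : IsCharacterFamily chi)
    (x : Fin d → R) (π : Equiv.Perm (Fin k)) :
    (π.partition.parts.map fun m => ∑ i, x i ^ m).prod * alternant x (staircase d) =
      ∑ l ∈ partitionVectors d k, chi k (partitionSeq l) π • alternant x (l + staircase d) := by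
  have expansion := congrArg (aeval x) (cyclePowerSum_mul_alternant (d := d) π)
  simp only [map_mul, map_sum, map_zsmul, aeval_cyclePowerSum, aeval_alternant,
    Fintype.card_fin] at expansion
  rw [expansion]
  refine sum_congr rfl fun l hl => ?_
  rw [characterFamily_eq_frobeniusCoeff hchi hl, Int.cast_smul_eq_zsmul]
  rfl

end CharacterFormula

end FrobeniusFormula

open FrobeniusFormula in
theorem stmt_19_general {d k : ℕ} {R : Type*} [CommRing R] [Algebra ℂ R]
    {chi : (k : ℕ) → (ℕ → ℕ) → Equiv.Perm (Fin k) → ℂ} (hchi : IsCharacterFamily chi)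
    (x : Fin d → R) {τ : Multiset ℕ} (hτsum : τ.sum = k)
    {π : Equiv.Perm (Fin k)} (hπ : π.cycleType = τ.filter (· ≠ 1)) :
    (τ.map fun r => ∑ i, x i ^ r).prod *
        (Matrix.of fun i j : Fin d => x i ^ (d - 1 - (j : ℕ))).det =
      ∑ lam ∈ Finset.univ.filter (fun lam : Fin d → Fin (k + 1) =>
          Antitone (fun i => (lam i : ℕ)) ∧ (∑ i, (lam i : ℕ)) = k),
        chi k (fun i => if h : i < d then (lam ⟨i, h⟩ : ℕ) else 0) π •
          (Matrix.of fun i j : Fin d => x i ^ ((lam j : ℕ) + (d - 1 - (j : ℕ)))).det := by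
  have expansion := prod_psum_mul_alternant hchi x π
  rw [parts_partition_eq hτsum hπ, sum_partitionVectors] at expansion
  exact expansion

/-- Frobenius character formula for Schur–Weyl duality:
`p_τ(x) = Σ_{lam ⊢ k, ℓ(lam) ≤ d} χ_lam(τ) s_lam(x)`, stated after multiplying both sides by
the Vandermonde determinant `det(x_i^{d−1−j}) = a_δ(x)`, using the bialternant formula
`s_lam(x) = det(x_i^{lam_j + d−1−j}) / a_δ(x)` for the Schur polynomial.  Here `τ` is a
partition of `k` (given as a multiset of non-zero parts), realised as the full cycle type of
a permutation `π ∈ S_k` (Mathlib's `cycleType` omits the fixed points, whence the `filter`). -/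
theorem stmt_19 {d k : ℕ} (hk : 0 < k)
    (chi : (k : ℕ) → (ℕ → ℕ) → Equiv.Perm (Fin k) → ℂ) (hchi : IsCharacterFamily chi)
    (x : Fin d → ℂ) (τ : Multiset ℕ) (hτ0 : 0 ∉ τ) (hτsum : τ.sum = k)
    (π : Equiv.Perm (Fin k)) (hπ : π.cycleType = τ.filter (· ≠ 1)) :
    (τ.map fun r => ∑ i, x i ^ r).prod *
        (Matrix.of fun i j : Fin d => x i ^ (d - 1 - (j : ℕ))).det =
      ∑ lam ∈ Finset.univ.filter (fun lam : Fin d → Fin (k + 1) =>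
          Antitone (fun i => (lam i : ℕ)) ∧ (∑ i, (lam i : ℕ)) = k),
        chi k (fun i => if h : i < d then (lam ⟨i, h⟩ : ℕ) else 0) π *
          (Matrix.of fun i j : Fin d => x i ^ ((lam j : ℕ) + (d - 1 - (j : ℕ)))).det := by
  exact stmt_19_general hchi x hτsum hπ

end
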